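/- Let a ≥ b ≥ k ≥ 1 with n ≥ a+b. Then the cokernel of γ_k: Λ^a⊗Λ^k⊗Λ^{b−k} → Λ^a⊗Λ^b is isomorphic as a G-module to the Schur module L_{(a,b)} if and only if a > k, or a = b = k = 1. -/

import Mathlib

open TensorProduct

set_option synthInstance.maxHeartbeats 1000000
set_option maxSynthPendingDepth 3
set_option maxHeartbeats 1000000

noncomputable section

namespace MMS

variable (K : Type) [Field K] [CharZero K] (n : ℕ)

/-- `V = K^n`, the natural module of `G = GL(n,K)`. -/
abbrev V : Type := Fin n → K

/-- `Λ^p`, the `p`-th exterior power of `V`. -/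
abbrev Lam (p : ℕ) : Type := ⋀[K]^p (V K n)

/-- The wedge `v_1 ∧ ⋯ ∧ v_p ∈ Λ^p`. -/
def wedge {p : ℕ} (v : Fin p → V K n) : Lam K n p :=
  ⟨ExteriorAlgebra.ιMulti K p v, ExteriorAlgebra.ιMulti_range K p (Set.mem_range_self v)⟩

/-- Transport along an equality of degrees. -/
def ecast {p q : ℕ} (h : p = q) : Lam K n p ≃ₗ[K] Lam K n q :=
  h ▸ LinearEquiv.refl K (Lam K n p)

/-- `m` is the wedge multiplication map `Λ^p ⊗ Λ^q → Λ^{p+q}`. -/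
def IsMulMap (p q : ℕ) (m : Lam K n p ⊗[K] Lam K n q →ₗ[K] Lam K n (p+q)) : Prop :=
  ∀ (v : Fin p → V K n) (w : Fin q → V K n),
    m (wedge K n v ⊗ₜ[K] wedge K n w) = wedge K n (Fin.append v w)

/-- The set of `(p,q)`-shuffles: permutations `σ` of `{1, …, p+q}` which are strictly
increasing on the first `p` and on the last `q` indices. -/
def shuffles (p q : ℕ) : Finset (Equiv.Perm (Fin (p+q))) :=
  Finset.univ.filter (fun σ =>
    (∀ i j : Fin (p+q), i < j → (j : ℕ) < p → σ i < σ j) ∧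
    (∀ i j : Fin (p+q), i < j → p ≤ (i : ℕ) → σ i < σ j))

/-- `D` is the component `Δ_{p,q} : Λ^{p+q} → Λ^p ⊗ Λ^q` of the comultiplication, i.e.
`Δ_{p,q}(v_1 ∧ ⋯ ∧ v_{p+q}) = Σ_σ sgn(σ) (v_{σ(1)} ∧ ⋯ ∧ v_{σ(p)}) ⊗ (v_{σ(p+1)} ∧ ⋯ ∧ v_{σ(p+q)})`,
the sum being over all `(p,q)`-shuffles. -/
def IsComulMap (p q : ℕ) (D : Lam K n (p+q) →ₗ[K] Lam K n p ⊗[K] Lam K n q) : Prop :=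
  ∀ v : Fin (p+q) → V K n,
    D (wedge K n v) =
      ∑ σ ∈ shuffles p q,
        (Equiv.Perm.sign σ : ℤ) •
          (wedge K n (fun i => v (σ (Fin.castAdd q i))) ⊗ₜ[K]
            wedge K n (fun i => v (σ (Fin.natAdd p i))))

variable (mf : ∀ p q : ℕ, Lam K n p ⊗[K] Lam K n q →ₗ[K] Lam K n (p+q))
variable (Df : ∀ p q : ℕ, Lam K n (p+q) →ₗ[K] Lam K n p ⊗[K] Lam K n q)

/-- The map `δ_t = (m ⊗ 1) ∘ (1 ⊗ Δ_{t,b-t}) : Λ^a ⊗ Λ^b → Λ^{a+t} ⊗ Λ^{b-t}`. -/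
def deltaMap (a b t : ℕ) (ht : t ≤ b) :
    Lam K n a ⊗[K] Lam K n b →ₗ[K] Lam K n (a+t) ⊗[K] Lam K n (b-t) :=
  (TensorProduct.map (mf a t) LinearMap.id)
    ∘ₗ (TensorProduct.assoc K (Lam K n a) (Lam K n t) (Lam K n (b-t))).symm.toLinearMap
    ∘ₗ (TensorProduct.map LinearMap.id
        ((Df t (b-t)) ∘ₗ (ecast K n (by omega : b = t + (b-t))).toLinearMap))

/-- The map `θ_t = (1 ⊗ m) ∘ (Δ_{a-t,t} ⊗ 1) : Λ^a ⊗ Λ^b → Λ^{a-t} ⊗ Λ^{b+t}`. -/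
def thetaMap (a b t : ℕ) (ht : t ≤ a) :
    Lam K n a ⊗[K] Lam K n b →ₗ[K] Lam K n (a-t) ⊗[K] Lam K n (b+t) :=
  (TensorProduct.map LinearMap.id
      ((ecast K n (by omega : t + b = b + t)).toLinearMap ∘ₗ mf t b))
    ∘ₗ (TensorProduct.assoc K (Lam K n (a-t)) (Lam K n t) (Lam K n b)).toLinearMap
    ∘ₗ (TensorProduct.map
        ((Df (a-t) t) ∘ₗ (ecast K n (by omega : a = (a-t) + t)).toLinearMap) LinearMap.id)

/-- The map `Φ_t = θ_t ∘ δ_t : Λ^a ⊗ Λ^b → Λ^a ⊗ Λ^b`. -/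
def PhiMap (a b t : ℕ) (hta : t ≤ a) (htb : t ≤ b) :
    Lam K n a ⊗[K] Lam K n b →ₗ[K] Lam K n a ⊗[K] Lam K n b :=
  (TensorProduct.congr (ecast K n (by omega : a + t - t = a))
      (ecast K n (by omega : b - t + t = b))).toLinearMap
    ∘ₗ thetaMap K n mf Df (a+t) (b-t) t (by omega)
    ∘ₗ deltaMap K n mf Df a b t htb

/-- The map `Φ_t`, extended by `0` to all `t`. -/
def PhiMap' (a b t : ℕ) :
    Lam K n a ⊗[K] Lam K n b →ₗ[K] Lam K n a ⊗[K] Lam K n b :=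
  if h : t ≤ a ∧ t ≤ b then PhiMap K n mf Df a b t h.1 h.2 else 0

/-- The map `θ_1 : Λ^{a+1} ⊗ Λ^{b-1} → Λ^a ⊗ Λ^b` (for `b ≥ 1`). -/
def theta1 (a b : ℕ) (hb : 1 ≤ b) :
    Lam K n (a+1) ⊗[K] Lam K n (b-1) →ₗ[K] Lam K n a ⊗[K] Lam K n b :=
  (TensorProduct.congr (ecast K n (by omega : a + 1 - 1 = a))
      (ecast K n (by omega : b - 1 + 1 = b))).toLinearMap
    ∘ₗ thetaMap K n mf Df (a+1) (b-1) 1 (by omega)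

/-- The submodule of relations defining the Schur module `L_{(a,b)}`: the image of
`θ_1` if `b ≥ 1`, and `0` if `b = 0`. -/
def schurRel (a b : ℕ) : Submodule K (Lam K n a ⊗[K] Lam K n b) :=
  if hb : 1 ≤ b then LinearMap.range (theta1 K n mf Df a b hb) else ⊥

/-- The Schur module `L_{(a,b)}`, realized as the cokernel of `θ_1` (in characteristic zero). -/
abbrev SchurL (a b : ℕ) : Type :=
  (Lam K n a ⊗[K] Lam K n b) ⧸ schurRel K n mf Df a b

/-- The projection `π_{(a,b)} : Λ^a ⊗ Λ^b → L_{(a,b)}`. -/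
def schurProj (a b : ℕ) : Lam K n a ⊗[K] Lam K n b →ₗ[K] SchurL K n mf Df a b :=
  (schurRel K n mf Df a b).mkQ

/-- The coefficient `c_t(a,b,i) = C(i,t)·C(a-b+t+i,t)`. -/
def cCoef (a b t i : ℕ) : ℕ := (i.choose t) * ((a-b+t+i).choose t)

/-- The group `G = GL(n,K)`. -/
abbrev GLn : Type := Matrix.GeneralLinearGroup (Fin n) K

/-- `rho` is the family of natural actions of `G = GL(n,K)` on the exterior powers `Λ^p`
of the natural module `V = K^n`. -/
def IsExtAction (rho : ∀ p : ℕ, GLn K n → (Lam K n p →ₗ[K] Lam K n p)) : Prop :=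
  ∀ (p : ℕ) (g : GLn K n) (v : Fin p → V K n),
    rho p g (wedge K n v) =
      wedge K n (fun i => Matrix.toLin' (g : Matrix (Fin n) (Fin n) K) (v i))

/-- The action of `g ∈ GL(n,K)` on `Λ^a ⊗ Λ^b`. -/
def rhoT (rho : ∀ p : ℕ, GLn K n → (Lam K n p →ₗ[K] Lam K n p)) (a b : ℕ) (g : GLn K n) :
    Lam K n a ⊗[K] Lam K n b →ₗ[K] Lam K n a ⊗[K] Lam K n b :=
  TensorProduct.map (rho a g) (rho b g)

/-- The quotients `M₁ ⧸ N₁` and `M₂ ⧸ N₂` are isomorphic as representations, with respect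
to the given actions `ρ₁, ρ₂` on `M₁` and `M₂` (which descend to the quotients). -/
def IsQuotIso {G' : Type} {M₁ M₂ : Type} [AddCommGroup M₁] [Module K M₁]
    [AddCommGroup M₂] [Module K M₂]
    (N₁ : Submodule K M₁) (N₂ : Submodule K M₂)
    (ρ₁ : G' → M₁ →ₗ[K] M₁) (ρ₂ : G' → M₂ →ₗ[K] M₂) : Prop :=
  ∃ e : (M₁ ⧸ N₁) ≃ₗ[K] (M₂ ⧸ N₂),
    ∀ (g : G') (x : M₁) (y : M₂),
      e (Submodule.Quotient.mk x) = Submodule.Quotient.mk y →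
      e (Submodule.Quotient.mk (ρ₁ g x)) = Submodule.Quotient.mk (ρ₂ g y)

/-- The "multiply in pairs" map
`(Λ^{p₁} ⊗ Λ^{q₁}) ⊗ (Λ^{p₂} ⊗ Λ^{q₂}) → Λ^{p₁+p₂} ⊗ Λ^{q₁+q₂}`. -/
def pairMul (p₁ q₁ p₂ q₂ : ℕ) :
    (Lam K n p₁ ⊗[K] Lam K n q₁) ⊗[K] (Lam K n p₂ ⊗[K] Lam K n q₂) →ₗ[K]
      Lam K n (p₁+p₂) ⊗[K] Lam K n (q₁+q₂) :=
  (TensorProduct.map (mf p₁ p₂) (mf q₁ q₂))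
    ∘ₗ (TensorProduct.tensorTensorTensorComm K (Lam K n p₁) (Lam K n q₁)
        (Lam K n p₂) (Lam K n q₂)).toLinearMap

/-- The map `φ_k = (m ⊗ m) ∘ (1 ⊗ τ ⊗ 1) ∘ (Δ_{a-k,k} ⊗ Δ_{k,b-k}) : Λ^a ⊗ Λ^b → Λ^a ⊗ Λ^b`. -/
def phiSmall (a b k : ℕ) (hka : k ≤ a) (hkb : k ≤ b) :
    Lam K n a ⊗[K] Lam K n b →ₗ[K] Lam K n a ⊗[K] Lam K n b :=
  (TensorProduct.congr (ecast K n (by omega : (a-k) + k = a))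
      (ecast K n (by omega : k + (b-k) = b))).toLinearMap
    ∘ₗ pairMul K n mf (a-k) k k (b-k)
    ∘ₗ (TensorProduct.map
        ((Df (a-k) k) ∘ₗ (ecast K n (by omega : a = (a-k) + k)).toLinearMap)
        ((Df k (b-k)) ∘ₗ (ecast K n (by omega : b = k + (b-k))).toLinearMap))

/-- The map `ψ_k = C(b,k)·1 - φ_k : Λ^a ⊗ Λ^b → Λ^a ⊗ Λ^b`. -/
def psiSmall (a b k : ℕ) (hka : k ≤ a) (hkb : k ≤ b) :
    Lam K n a ⊗[K] Lam K n b →ₗ[K] Lam K n a ⊗[K] Lam K n b :=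
  (Nat.choose b k : K) • LinearMap.id - phiSmall K n mf Df a b k hka hkb

/-- The map `β_k = (m ⊗ m) ∘ (1 ⊗ τ ⊗ 1) ∘ (Δ_{a-k,k} ⊗ 1 ⊗ 1) : Λ^a ⊗ (Λ^k ⊗ Λ^{b-k}) → Λ^a ⊗ Λ^b`. -/
def betaMap (a b k : ℕ) (hka : k ≤ a) (hkb : k ≤ b) :
    Lam K n a ⊗[K] (Lam K n k ⊗[K] Lam K n (b-k)) →ₗ[K] Lam K n a ⊗[K] Lam K n b :=
  (TensorProduct.congr (ecast K n (by omega : (a-k) + k = a))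
      (ecast K n (by omega : k + (b-k) = b))).toLinearMap
    ∘ₗ pairMul K n mf (a-k) k k (b-k)
    ∘ₗ (TensorProduct.map
        ((Df (a-k) k) ∘ₗ (ecast K n (by omega : a = (a-k) + k)).toLinearMap)
        LinearMap.id)

/-- The map `γ_k : Λ^a ⊗ (Λ^k ⊗ Λ^{b-k}) → Λ^a ⊗ Λ^b`,
`γ_k(x ⊗ y ⊗ z) = x ⊗ (y ∧ z) - β_k(x ⊗ y ⊗ z)`. -/
def gammaMap (a b k : ℕ) (hka : k ≤ a) (hkb : k ≤ b) :
    Lam K n a ⊗[K] (Lam K n k ⊗[K] Lam K n (b-k)) →ₗ[K] Lam K n a ⊗[K] Lam K n b :=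
  (TensorProduct.map LinearMap.id
      ((ecast K n (by omega : k + (b-k) = b)).toLinearMap ∘ₗ mf k (b-k)))
    - betaMap K n mf Df a b k hka hkb

/-- The quantity `d_k(a,b,t)` (for the given `i`), from Lemma 5.3 of the paper. -/
def dInt (a b k i t : ℕ) : ℤ :=
  1 - ∑ j ∈ Finset.Icc (i - min (b-k) i) t,
        (-1:ℤ)^j * ((a-k+j).choose (a-k) : ℤ) * ((b-k+t-i).choose (t-j) : ℤ)

end MMS

namespace MMS

/-
Under `Λ(V × V) ≅ Λ(V) ⊗ Λ(V)` the comultiplication `Δ` is the algebra homomorphism induced by the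
diagonal of `V`. The image of `θ_1` is spanned by the `(a, b)`-components of `Δ(x) (1 ⊗ w)` with
`x` of degree `a + 1`, and in characteristic zero it contains those with `x` of degree `a + s`,
`s ≥ 1`. As `Δ(u) = u ⊗ 1 + 1 ⊗ u` for `u ∈ V`, one has `Δ(x) (y ⊗ z) ≡ (-1)^deg(y) Δ(x) (1 ⊗ yz)`
up to such elements with `x` of higher degree. Hence `im γ_k ⊆ im θ_1`, and comparing dimensions,
the cokernels are isomorphic if and only if the two images are equal.

For `x` of degree `a + s` and `yz` of degree `b - s`, the relations given by `γ_k` for the terms of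
`Δ_{a,s}(x)` add up to `(1 - (-1)^s C(a+s-k, s)) Δ(x) (1 ⊗ yz) ≡ 0` up to elements with `x` of
higher degree. If `k < a`, then no coefficient with `1 ≤ s ≤ k` vanishes, and descending induction
on `s` gives `im θ_1 ⊆ im γ_k`. If `k = a`, then `b = a` and `im γ_a` consists of antisymmetric
tensors, but `im θ_1` does not as soon as `2 ≤ a` and `a + 2 ≤ n`.
-/

section Shuffles

variable {p q : ℕ}

/-- The set of values that `σ` takes on the last `q` of `p + q` indices. A `(p, q)`-shuffle is
determined by it, which turns sums over shuffles into sums over `q`-element subsets. -/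
def lastValues (σ : Equiv.Perm (Fin (p + q))) : Finset (Fin (p + q)) :=
  Finset.univ.image fun i : Fin q => σ (Fin.natAdd p i)

theorem apply_natAdd_mem_lastValues (σ : Equiv.Perm (Fin (p + q))) (i : Fin q) :
    σ (Fin.natAdd p i) ∈ lastValues σ :=
  Finset.mem_image_of_mem _ (Finset.mem_univ i)

theorem apply_castAdd_notMem_lastValues (σ : Equiv.Perm (Fin (p + q))) (i : Fin p) :
    σ (Fin.castAdd q i) ∉ lastValues σ := by
  simp only [lastValues, Finset.mem_image, Finset.mem_univ, true_and, σ.injective.eq_iff,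
    not_exists, Fin.ext_iff, Fin.val_natAdd, Fin.val_castAdd]
  omega

theorem card_lastValues (σ : Equiv.Perm (Fin (p + q))) : (lastValues σ).card = q :=
  (Finset.card_image_of_injective _ (σ.injective.comp (Fin.natAdd_injective q p))).trans
    (Finset.card_fin q)

theorem card_compl_lastValues (σ : Equiv.Perm (Fin (p + q))) : (lastValues σ)ᶜ.card = p := by
  rw [Finset.card_compl, card_lastValues, Fintype.card_fin, Nat.add_sub_cancel]

theorem piecewise_lastValues_comp {M : Type*} (σ : Equiv.Perm (Fin (p + q)))
    (w u : Fin (p + q) → M) :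
    (lastValues σ).piecewise w u ∘ σ =
      Fin.append (fun i => u (σ (Fin.castAdd q i))) (fun i => w (σ (Fin.natAdd p i))) := by
  funext i
  refine Fin.addCases (fun i => ?_) (fun i => ?_) i
  · simp [apply_castAdd_notMem_lastValues]
  · simp [apply_natAdd_mem_lastValues]

theorem mem_shuffles_iff {σ : Equiv.Perm (Fin (p + q))} :
    σ ∈ shuffles p q ↔
      StrictMono (fun i => σ (Fin.castAdd q i)) ∧ StrictMono (fun i => σ (Fin.natAdd p i)) := by
  simp only [shuffles, Finset.mem_filter, Finset.mem_univ, true_and]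
  constructor
  · rintro ⟨hl, hr⟩
    exact ⟨fun i j hij => hl _ _ hij j.2,
      fun i j hij => hr _ _ (Nat.add_lt_add_left hij p) (Nat.le_add_right p i)⟩
  · rintro ⟨hl, hr⟩
    constructor <;> intro i j hij h
    · exact @hl ⟨i, lt_trans hij h⟩ ⟨j, h⟩ hij
    · induction i using Fin.addCases with
      | left i => exact absurd i.2 h.not_gt
      | right i =>
        induction j using Fin.addCases with
        | left j => exact absurd (h.trans_lt hij) j.2.not_gt
        | right j => exact hr (Nat.lt_of_add_lt_add_left hij)

theorem lastValues_injOn : Set.InjOn (lastValues (p := p) (q := q)) (shuffles p q) := by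
  intro σ hσ τ hτ h
  obtain ⟨hσl, hσr⟩ := mem_shuffles_iff.1 hσ
  obtain ⟨hτl, hτr⟩ := mem_shuffles_iff.1 hτ
  have hleft : ∀ i : Fin p, σ (Fin.castAdd q i) = τ (Fin.castAdd q i) := congrFun <|
    (Finset.orderEmbOfFin_unique (card_compl_lastValues σ)
      (fun i => Finset.mem_compl.2 (apply_castAdd_notMem_lastValues σ i)) hσl).trans
    (Finset.orderEmbOfFin_unique (card_compl_lastValues σ)
      (fun i => Finset.mem_compl.2 (h ▸ apply_castAdd_notMem_lastValues τ i)) hτl).symm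
  have hright : ∀ i : Fin q, σ (Fin.natAdd p i) = τ (Fin.natAdd p i) := congrFun <|
    (Finset.orderEmbOfFin_unique (card_lastValues σ) (apply_natAdd_mem_lastValues σ) hσr).trans
    (Finset.orderEmbOfFin_unique (card_lastValues σ)
      (fun i => h ▸ apply_natAdd_mem_lastValues τ i) hτr).symm
  exact Equiv.ext fun i => Fin.addCases hleft hright i

theorem exists_mem_shuffles_lastValues_eq {Q : Finset (Fin (p + q))} (hQ : Q.card = q) :
    ∃ σ ∈ shuffles p q, lastValues σ = Q := by
  have hQ' : Qᶜ.card = p := by rw [Finset.card_compl, hQ, Fintype.card_fin, Nat.add_sub_cancel]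
  let σ : Equiv.Perm (Fin (p + q)) :=
    finSumFinEquiv.symm.trans (finSumEquivOfFinset hQ' ((compl_compl Q).symm ▸ hQ))
  have hleft (i : Fin p) : σ (Fin.castAdd q i) = Qᶜ.orderEmbOfFin hQ' i := by simp [σ]
  have hright (i : Fin q) : σ (Fin.natAdd p i) = Q.orderEmbOfFin hQ i := by simp [σ]
  refine ⟨σ, mem_shuffles_iff.2 ⟨?_, ?_⟩, ?_⟩
  · simpa only [hleft] using (Qᶜ.orderEmbOfFin hQ').strictMono
  · simpa only [hright] using (Q.orderEmbOfFin hQ).strictMono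
  · simp only [lastValues, hright]
    exact Finset.image_orderEmbOfFin_univ Q hQ

theorem sum_shuffles_lastValues {N : Type*} [AddCommMonoid N] (F : Finset (Fin (p + q)) → N) :
    ∑ σ ∈ shuffles p q, F (lastValues σ) = ∑ Q ∈ Finset.powersetCard q Finset.univ, F Q :=
  Finset.sum_nbij lastValues (fun σ _ => Finset.mem_powersetCard_univ.2 (card_lastValues σ))
    lastValues_injOn
    (fun _ hQ => exists_mem_shuffles_lastValues_eq (Finset.mem_powersetCard_univ.1 hQ))
    fun _ _ => rfl

end Shuffles

theorem sum_powersetCard_map_piecewise_add {R ι M N : Type*} [CommSemiring R] [Fintype ι]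
    [DecidableEq ι] [AddCommMonoid M] [AddCommMonoid N] [Module R M] [Module R N]
    (f : MultilinearMap R (fun _ : ι => M) N) (u w : ι → M) (q : ℕ) :
    ∑ S ∈ Finset.powersetCard q Finset.univ, f (S.piecewise u (w + u)) =
      ∑ Q : Finset ι, Q.card.choose q • f (Q.piecewise u w) := by
  have expand (S : Finset ι) : f (S.piecewise u (w + u)) =
      ∑ Q ∈ Finset.univ.filter (S ⊆ ·), f (Q.piecewise u w) := by
    rw [← Finset.piecewise_compl, f.map_piecewise_add]
    exact Finset.sum_nbij' compl compl (by simp [Finset.subset_compl_comm])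
      (by simp) (by simp) (by simp) fun Q _ => by rw [Finset.piecewise_compl]
  calc ∑ S ∈ Finset.powersetCard q Finset.univ, f (S.piecewise u (w + u))
    _ = ∑ Q : Finset ι, ∑ _S ∈ Finset.powersetCard q Q, f (Q.piecewise u w) := by
      simp_rw [expand]
      exact Finset.sum_comm' fun S Q => by simp [Finset.mem_powersetCard, and_comm]
    _ = ∑ Q : Finset ι, Q.card.choose q • f (Q.piecewise u w) := by
      simp only [Finset.sum_const, Finset.card_powersetCard]

section GradedCommutativity

variable {R M N : Type*} [CommRing R] [AddCommGroup M] [Module R M] [AddCommGroup N] [Module R N]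

theorem ι_mul_comm_of_mem {q : ℕ} (u : M) {y : ExteriorAlgebra R M} (hy : y ∈ ⋀[R]^q M) :
    ExteriorAlgebra.ι R u * y = (-1 : R) ^ q • (y * ExteriorAlgebra.ι R u) := by
  induction hy using Submodule.pow_induction_on_left' with
  | algebraMap r => simp [Algebra.commutes]
  | add x y i _ _ ihx ihy => rw [mul_add, add_mul, ihx, ihy, smul_add]
  | mem_mul m hm i x _ ih =>
    obtain ⟨w, rfl⟩ := hm
    rw [← mul_assoc, eq_neg_of_add_eq_zero_left (ExteriorAlgebra.ι_add_mul_swap u w), neg_mul,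
      mul_assoc, ih, pow_succ, mul_neg_one, neg_smul, mul_smul_comm, mul_assoc]

theorem mul_comm_of_mem {p q : ℕ} {x y : ExteriorAlgebra R M} (hx : x ∈ ⋀[R]^p M)
    (hy : y ∈ ⋀[R]^q M) : x * y = (-1 : R) ^ (p * q) • (y * x) := by
  induction hx using Submodule.pow_induction_on_left' with
  | algebraMap r => simp [Algebra.commutes]
  | add x x' i _ _ ihx ihy => rw [mul_add, add_mul, ihx, ihy, smul_add]
  | mem_mul m hm i x _ ih =>
    obtain ⟨w, rfl⟩ := hm
    rw [mul_assoc, ih, mul_smul_comm, ← mul_assoc, ι_mul_comm_of_mem w hy, smul_mul_assoc,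
      mul_assoc, smul_smul, ← pow_add, Nat.succ_mul]

theorem eqOn_exteriorPower {p : ℕ} {f g : ExteriorAlgebra R M →ₗ[R] N}
    (h : ∀ v, f (ExteriorAlgebra.ιMulti R p v) = g (ExteriorAlgebra.ιMulti R p v)) :
    Set.EqOn f g (⋀[R]^p M) := by
  rw [← ExteriorAlgebra.ιMulti_span_fixedDegree]
  exact LinearMap.eqOn_span' (Set.forall_mem_range.2 h)

theorem linearMap_ext_ιMulti {f g : ExteriorAlgebra R M →ₗ[R] N}
    (h : ∀ p v, f (ExteriorAlgebra.ιMulti R p v) = g (ExteriorAlgebra.ιMulti R p v)) : f = g :=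
  LinearMap.ext_on_range (ExteriorAlgebra.ιMulti_span R M) fun x => h x.1 x.2

theorem map_mem_exteriorPower (f : M →ₗ[R] N) {p : ℕ} {x : ExteriorAlgebra R M}
    (hx : x ∈ ⋀[R]^p M) : ExteriorAlgebra.map f x ∈ ⋀[R]^p N := by
  rw [← ExteriorAlgebra.ιMulti_span_fixedDegree] at hx
  refine Submodule.span_le (p := (⋀[R]^p N).comap (ExteriorAlgebra.map f).toLinearMap).2 ?_ hx
  rintro _ ⟨v, rfl⟩
  simpa using ExteriorAlgebra.ιMulti_range R p ⟨f ∘ v, rfl⟩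

variable (R M) in
/-- The projection of the exterior algebra onto its component of degree `p`. -/
def degreeProj (p : ℕ) : ExteriorAlgebra R M →ₗ[R] ⋀[R]^p M :=
  DirectSum.component R ℕ _ p ∘ₗ
    (DirectSum.decomposeLinearEquiv (fun i : ℕ => ⋀[R]^i M)).toLinearMap

theorem degreeProj_of_mem {p : ℕ} {x : ExteriorAlgebra R M} (hx : x ∈ ⋀[R]^p M) :
    degreeProj R M p x = ⟨x, hx⟩ :=
  Subtype.ext (DirectSum.decompose_of_mem_same (fun i : ℕ => ⋀[R]^i M) hx)

@[simp]
theorem degreeProj_coe {p : ℕ} (x : ⋀[R]^p M) : degreeProj R M p x = x :=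
  degreeProj_of_mem x.2

theorem degreeProj_of_mem_of_ne {p q : ℕ} {x : ExteriorAlgebra R M} (hx : x ∈ ⋀[R]^p M)
    (h : p ≠ q) : degreeProj R M q x = 0 :=
  Subtype.ext (DirectSum.decompose_of_mem_ne (fun i : ℕ => ⋀[R]^i M) hx h)

theorem degreeProj_map (f : M →ₗ[R] N) (p : ℕ) (x : ExteriorAlgebra R M) :
    degreeProj R N p (ExteriorAlgebra.map f x) = exteriorPower.map p f (degreeProj R M p x) := by
  suffices h : degreeProj R N p ∘ₗ (ExteriorAlgebra.map f).toLinearMap =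
      exteriorPower.map p f ∘ₗ degreeProj R M p from LinearMap.congr_fun h x
  refine linearMap_ext_ιMulti fun q v => ?_
  have hv : ExteriorAlgebra.ιMulti R q v ∈ ⋀[R]^q M := ExteriorAlgebra.ιMulti_range R q ⟨v, rfl⟩
  obtain rfl | hqp := eq_or_ne q p
  · have h : (⟨_, hv⟩ : ⋀[R]^q M) = exteriorPower.ιMulti R q v := rfl
    simp only [LinearMap.comp_apply, AlgHom.toLinearMap_apply, degreeProj_of_mem hv, h,
      exteriorPower.map_apply_ιMulti, ExteriorAlgebra.map_apply_ιMulti]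
    exact degreeProj_coe (exteriorPower.ιMulti R q (f ∘ v))
  · simp only [LinearMap.comp_apply, AlgHom.toLinearMap_apply, degreeProj_of_mem_of_ne hv hqp,
      degreeProj_of_mem_of_ne (map_mem_exteriorPower f hv) hqp, map_zero]

end GradedCommutativity

section Doubling

variable {R M : Type*} [CommRing R] [AddCommGroup M] [Module R M]

/-- The map of exterior algebras induced by the first inclusion `M → M × M`. -/
def inL : ExteriorAlgebra R M →ₐ[R] ExteriorAlgebra R (M × M) :=
  ExteriorAlgebra.map (LinearMap.inl R M M)

/-- The map of exterior algebras induced by the second inclusion `M → M × M`. -/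
def inR : ExteriorAlgebra R M →ₐ[R] ExteriorAlgebra R (M × M) :=
  ExteriorAlgebra.map (LinearMap.inr R M M)

/-- The map of exterior algebras induced by the diagonal `M → M × M`. Under
`Λ(M × M) ≅ Λ(M) ⊗ Λ(M)` it is the total comultiplication. -/
def diag : ExteriorAlgebra R M →ₐ[R] ExteriorAlgebra R (M × M) :=
  ExteriorAlgebra.map (LinearMap.inl R M M + LinearMap.inr R M M)

theorem inR_mul_inL {p q : ℕ} {x y : ExteriorAlgebra R M} (hy : y ∈ ⋀[R]^q M)
    (hx : x ∈ ⋀[R]^p M) : inR y * inL x = (-1 : R) ^ (q * p) • (inL x * inR y) :=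
  mul_comm_of_mem (map_mem_exteriorPower _ hy) (map_mem_exteriorPower _ hx)

variable (R M) in
/-- The isomorphism from `Λ(M × M)` to the graded tensor square of `Λ(M)`, as a homomorphism. -/
def toGradedTensor : ExteriorAlgebra R (M × M) →ₐ[R]
    GradedTensorProduct R (CliffordAlgebra.evenOdd (0 : QuadraticForm R M))
      (CliffordAlgebra.evenOdd (0 : QuadraticForm R M)) :=
  ExteriorAlgebra.lift R ⟨(CliffordAlgebra.ofProd 0 0).toLinearMap ∘ₗ CliffordAlgebra.ι _,
    fun m => by
      simp only [LinearMap.comp_apply, AlgHom.toLinearMap_apply, ← map_mul,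
        CliffordAlgebra.ι_sq_scalar]
      simp⟩

theorem toGradedTensor_inL (x : ExteriorAlgebra R M) :
    toGradedTensor R M (inL x) = GradedTensorProduct.includeLeft _ _ x := by
  have h : (toGradedTensor R M).comp inL = GradedTensorProduct.includeLeft _ _ := by
    apply ExteriorAlgebra.hom_ext
    ext v
    simp [toGradedTensor, inL]
  exact DFunLike.congr_fun h x

theorem toGradedTensor_inR (x : ExteriorAlgebra R M) :
    toGradedTensor R M (inR x) = GradedTensorProduct.includeRight _ _ x := by
  have h : (toGradedTensor R M).comp inR = GradedTensorProduct.includeRight _ _ := by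
    apply ExteriorAlgebra.hom_ext
    ext v
    simp [toGradedTensor, inR]
  exact DFunLike.congr_fun h x

/-- The projection of `Λ(M × M)` onto its component `Λ^a ⊗ Λ^b`. -/
def bidegreeProj (a b : ℕ) : ExteriorAlgebra R (M × M) →ₗ[R] ⋀[R]^a M ⊗[R] ⋀[R]^b M :=
  TensorProduct.map (degreeProj R M a) (degreeProj R M b) ∘ₗ
    (GradedTensorProduct.of R _ _).symm.toLinearMap ∘ₗ (toGradedTensor R M).toLinearMap

theorem bidegreeProj_inL_mul_inR (a b : ℕ) (x y : ExteriorAlgebra R M) :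
    bidegreeProj a b (inL x * inR y) = degreeProj R M a x ⊗ₜ degreeProj R M b y := by
  have h : toGradedTensor R M (inL x * inR y) = GradedTensorProduct.tmul R x y := by
    rw [map_mul, toGradedTensor_inL, toGradedTensor_inR]
    exact GradedTensorProduct.tmul_one_mul_one_tmul _ _ x y
  simp only [bidegreeProj, LinearMap.comp_apply, AlgHom.toLinearMap_apply, h]
  rfl

end Doubling

section SplitWedge

variable {R M N : Type*} [CommRing R] [AddCommGroup M] [Module R M] [AddCommGroup N] [Module R N]
variable {m : ℕ}

/-- The wedge in `Λ(M × M)` of the vectors `(0, w i)` for `i ∈ Q` and `(u i, 0)` for `i ∉ Q`, in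
the order of the indices. -/
def splitWedge (u w : Fin m → M) (Q : Finset (Fin m)) : ExteriorAlgebra R (M × M) :=
  ExteriorAlgebra.ιMulti R m (Q.piecewise (LinearMap.inr R M M ∘ w) (LinearMap.inl R M M ∘ u))

theorem splitWedge_lastValues {p q : ℕ} (u w : Fin (p + q) → M) (σ : Equiv.Perm (Fin (p + q))) :
    splitWedge (R := R) u w (lastValues σ) = (Equiv.Perm.sign σ : ℤ) •
      (inL (ExteriorAlgebra.ιMulti R p fun i => u (σ (Fin.castAdd q i))) *
        inR (ExteriorAlgebra.ιMulti R q fun i => w (σ (Fin.natAdd p i)))) := by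
  have hperm := AlternatingMap.map_perm (ExteriorAlgebra.ιMulti R (p + q))
    ((lastValues σ).piecewise (LinearMap.inr R M M ∘ w) (LinearMap.inl R M M ∘ u)) σ
  rw [piecewise_lastValues_comp, ← ExteriorAlgebra.ιMulti_mul_ιMulti] at hperm
  rw [inL, inR, ExteriorAlgebra.map_apply_ιMulti, ExteriorAlgebra.map_apply_ιMulti,
    ← Units.smul_def, ← inv_smul_eq_iff, Int.units_inv_eq_self]
  exact hperm.symm

theorem exists_splitWedge_eq (u w : Fin m → M) {p : ℕ} {Q : Finset (Fin m)}
    (hQ : p + Q.card = m) :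
    ∃ x ∈ ⋀[R]^p M, ∃ y ∈ ⋀[R]^Q.card M, splitWedge u w Q = inL x * inR y := by
  obtain ⟨q, hq⟩ : ∃ q, Q.card = q := ⟨_, rfl⟩
  rw [hq] at hQ ⊢
  subst hQ
  obtain ⟨σ, -, rfl⟩ := exists_mem_shuffles_lastValues_eq hq
  refine ⟨_, Submodule.smul_of_tower_mem _ (Equiv.Perm.sign σ : ℤ)
    (ExteriorAlgebra.ιMulti_range R p ⟨fun i => u (σ (Fin.castAdd q i)), rfl⟩), _,
    ExteriorAlgebra.ιMulti_range R q ⟨fun i => w (σ (Fin.natAdd p i)), rfl⟩, ?_⟩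
  rw [splitWedge_lastValues, map_zsmul, smul_mul_assoc]

theorem ιMulti_inl_add_inr (u w : Fin m → M) :
    ExteriorAlgebra.ιMulti R m (LinearMap.inl R M M ∘ u + LinearMap.inr R M M ∘ w) =
      ∑ Q : Finset (Fin m), splitWedge u w Q := by
  rw [add_comm]
  exact (ExteriorAlgebra.ιMulti R m).toMultilinearMap.map_add_univ _ _

theorem diag_ιMulti (v : Fin m → M) :
    diag (ExteriorAlgebra.ιMulti R m v) = ∑ Q : Finset (Fin m), splitWedge v v Q := by
  rw [← ιMulti_inl_add_inr, diag, ExteriorAlgebra.map_apply_ιMulti]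
  rfl

theorem linearMap_ext_inL_mul_inR {f g : ExteriorAlgebra R (M × M) →ₗ[R] N}
    (h : ∀ x y, f (inL x * inR y) = g (inL x * inR y)) : f = g := by
  refine linearMap_ext_ιMulti fun m v => ?_
  have hv : v = LinearMap.inl R M M ∘ (fun i => (v i).1) + LinearMap.inr R M M ∘ fun i => (v i).2 :=
    funext fun i => by simp
  rw [hv, ιMulti_inl_add_inr, map_sum, map_sum]
  refine Finset.sum_congr rfl fun Q _ => ?_
  obtain ⟨x, -, y, -, hxy⟩ := exists_splitWedge_eq (R := R) (fun i => (v i).1) (fun i => (v i).2)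
    (Q := Q) (Nat.sub_add_cancel (card_finset_fin_le Q))
  rw [hxy, h]

theorem map_prodMap_inL (f g : M →ₗ[R] N) (x : ExteriorAlgebra R M) :
    ExteriorAlgebra.map (f.prodMap g) (inL x) = inL (ExteriorAlgebra.map f x) := by
  simp only [inL, ← AlgHom.comp_apply, ExteriorAlgebra.map_comp_map]
  congr 2
  ext <;> simp

theorem map_prodMap_inR (f g : M →ₗ[R] N) (y : ExteriorAlgebra R M) :
    ExteriorAlgebra.map (f.prodMap g) (inR y) = inR (ExteriorAlgebra.map g y) := by
  simp only [inR, ← AlgHom.comp_apply, ExteriorAlgebra.map_comp_map]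
  congr 2
  ext <;> simp

theorem map_prodMap_diag (f : M →ₗ[R] N) (x : ExteriorAlgebra R M) :
    ExteriorAlgebra.map (f.prodMap f) (diag x) = diag (ExteriorAlgebra.map f x) := by
  simp only [diag, ← AlgHom.comp_apply, ExteriorAlgebra.map_comp_map]
  congr 2
  ext <;> simp

theorem bidegreeProj_map_prodMap (f g : M →ₗ[R] N) (a b : ℕ) (T : ExteriorAlgebra R (M × M)) :
    bidegreeProj a b (ExteriorAlgebra.map (f.prodMap g) T) =
      TensorProduct.map (exteriorPower.map a f) (exteriorPower.map b g) (bidegreeProj a b T) := by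
  suffices h : bidegreeProj a b ∘ₗ (ExteriorAlgebra.map (f.prodMap g)).toLinearMap =
      TensorProduct.map (exteriorPower.map a f) (exteriorPower.map b g) ∘ₗ bidegreeProj a b from
    LinearMap.congr_fun h T
  refine linearMap_ext_inL_mul_inR fun x y => ?_
  simp only [LinearMap.comp_apply, AlgHom.toLinearMap_apply, map_mul, map_prodMap_inL,
    map_prodMap_inR, bidegreeProj_inL_mul_inR, degreeProj_map, TensorProduct.map_tmul]

theorem bidegreeProj_splitWedge_mul_eq_zero (u w : Fin m → M) {a b c d : ℕ} {Q : Finset (Fin m)}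
    (hQ : Q.card + d ≠ b) {y z : ExteriorAlgebra R M} (hy : y ∈ ⋀[R]^c M) (hz : z ∈ ⋀[R]^d M) :
    bidegreeProj a b (splitWedge u w Q * inL y * inR z) = 0 := by
  obtain ⟨x, -, x', hx', hxx'⟩ := exists_splitWedge_eq (R := R) u w
    (Nat.sub_add_cancel (card_finset_fin_le Q))
  rw [hxx', mul_assoc (inL x), inR_mul_inL hx' hy, mul_smul_comm, smul_mul_assoc, map_smul,
    ← mul_assoc, ← map_mul, mul_assoc, ← map_mul, bidegreeProj_inL_mul_inR,
    degreeProj_of_mem_of_ne (SetLike.mul_mem_graded hx' hz) hQ, TensorProduct.tmul_zero, smul_zero]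

theorem bidegreeProj_sum_smul_splitWedge_mul {a b c d : ℕ} (g : ℕ → ℕ)
    (v : Fin m → M) {y z : ExteriorAlgebra R M} (hy : y ∈ ⋀[R]^c M) (hz : z ∈ ⋀[R]^d M) :
    bidegreeProj a b ((∑ Q : Finset (Fin m), g Q.card • splitWedge v v Q) * inL y * inR z) =
      g (b - d) • bidegreeProj a b (diag (ExteriorAlgebra.ιMulti R m v) * inL y * inR z) := by
  simp only [diag_ιMulti, Finset.sum_mul, map_sum, Finset.smul_sum, smul_mul_assoc, map_nsmul]
  refine Finset.sum_congr rfl fun Q _ => ?_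
  by_cases hQ : Q.card + d = b
  · rw [Nat.eq_sub_of_add_eq hQ]
  · rw [bidegreeProj_splitWedge_mul_eq_zero v v hQ hy hz, smul_zero, smul_zero]

end SplitWedge

section Comultiplication

variable {R M N : Type*} [CommRing R] [AddCommGroup M] [Module R M] [AddCommGroup N] [Module R N]

/-- The linear map `Λ^p(M) ⊗ Λ^q(M) → Λ(N)`, `x ⊗ y ↦ Λ(f)(x) ∧ Λ(g)(y)`, induced by two linear
maps `f, g : M → N`. -/
def mapMul (f g : M →ₗ[R] N) (p q : ℕ) : ⋀[R]^p M ⊗[R] ⋀[R]^q M →ₗ[R] ExteriorAlgebra R N :=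
  LinearMap.mul' R (ExteriorAlgebra R N) ∘ₗ
    TensorProduct.map ((ExteriorAlgebra.map f).toLinearMap ∘ₗ (⋀[R]^p M).subtype)
      ((ExteriorAlgebra.map g).toLinearMap ∘ₗ (⋀[R]^q M).subtype)

@[simp]
theorem mapMul_tmul (f g : M →ₗ[R] N) {p q : ℕ} (x : ⋀[R]^p M) (y : ⋀[R]^q M) :
    mapMul f g p q (x ⊗ₜ y) = ExteriorAlgebra.map f x * ExteriorAlgebra.map g y :=
  rfl

theorem mapMul_eq_map_coprod (f g : M →ₗ[R] N) {p q : ℕ} (t : ⋀[R]^p M ⊗[R] ⋀[R]^q M) :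
    mapMul f g p q t = ExteriorAlgebra.map (f.coprod g)
      (mapMul (LinearMap.inl R M M) (LinearMap.inr R M M) p q t) := by
  induction t using TensorProduct.induction_on with
  | zero => simp only [map_zero]
  | add s t hs ht => simp only [map_add, hs, ht]
  | tmul x y =>
    rw [mapMul_tmul, mapMul_tmul, map_mul, ← AlgHom.comp_apply, ← AlgHom.comp_apply,
      ExteriorAlgebra.map_comp_map, ExteriorAlgebra.map_comp_map, LinearMap.coprod_inl,
      LinearMap.coprod_inr]

theorem bidegreeProj_mapMul {p q : ℕ} (t : ⋀[R]^p M ⊗[R] ⋀[R]^q M) :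
    bidegreeProj p q (mapMul (LinearMap.inl R M M) (LinearMap.inr R M M) p q t) = t := by
  induction t using TensorProduct.induction_on with
  | zero => simp only [map_zero]
  | add s t hs ht => simp only [map_add, hs, ht]
  | tmul x y =>
    rw [mapMul_tmul]
    exact (bidegreeProj_inL_mul_inR p q _ _).trans (by rw [degreeProj_coe, degreeProj_coe])

theorem mapMul_bidegreeProj {p q : ℕ} {x y : ExteriorAlgebra R M} (hx : x ∈ ⋀[R]^p M)
    (hy : y ∈ ⋀[R]^q M) : mapMul (LinearMap.inl R M M) (LinearMap.inr R M M) p q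
      (bidegreeProj p q (inL x * inR y)) = inL x * inR y := by
  rw [bidegreeProj_inL_mul_inR, degreeProj_of_mem hx, degreeProj_of_mem hy]
  rfl

/-- The component `Λ^{p+q} → Λ^p ⊗ Λ^q` of the comultiplication, extended by zero to the other
degrees. -/
def comul (p q : ℕ) : ExteriorAlgebra R M →ₗ[R] ⋀[R]^p M ⊗[R] ⋀[R]^q M :=
  bidegreeProj p q ∘ₗ diag.toLinearMap

theorem mapMul_inl_inr_comul_ιMulti {p q : ℕ} (v : Fin (p + q) → M) :
    mapMul (LinearMap.inl R M M) (LinearMap.inr R M M) p q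
        (comul p q (ExteriorAlgebra.ιMulti R (p + q) v)) =
      ∑ Q ∈ Finset.powersetCard q Finset.univ, splitWedge v v Q := by
  rw [comul, LinearMap.comp_apply, AlgHom.toLinearMap_apply, diag_ιMulti, map_sum, map_sum,
    Finset.powersetCard_eq_filter, Finset.sum_filter, Finset.powerset_univ]
  refine Finset.sum_congr rfl fun Q _ => ?_
  split_ifs with hQ
  · obtain ⟨x, hx, y, hy, hxy⟩ := exists_splitWedge_eq (R := R) v v (Q := Q) (by rw [hQ])
    rw [hxy, mapMul_bidegreeProj hx (hQ ▸ hy)]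
  · have h := bidegreeProj_splitWedge_mul_eq_zero (R := R) v v (a := p) (b := q) (c := 0) (d := 0)
      hQ (SetLike.one_mem_graded _) (SetLike.one_mem_graded _)
    rw [map_one, map_one, mul_one, mul_one] at h
    rw [h, map_zero]

theorem mapMul_comul_ιMulti (f g : M →ₗ[R] N) {p q : ℕ} (v : Fin (p + q) → M) :
    mapMul f g p q (comul p q (ExteriorAlgebra.ιMulti R (p + q) v)) =
      ∑ S ∈ Finset.powersetCard q Finset.univ,
        ExteriorAlgebra.ιMulti R (p + q) (S.piecewise (g ∘ v) (f ∘ v)) := by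
  rw [mapMul_eq_map_coprod, mapMul_inl_inr_comul_ιMulti, map_sum]
  refine Finset.sum_congr rfl fun S _ => ?_
  rw [splitWedge, ExteriorAlgebra.map_apply_ιMulti]
  congr 1
  funext i
  by_cases hi : i ∈ S <;> simp [hi]

theorem bidegreeProj_mapMul_comul_mul {p q : ℕ} {f g : M →ₗ[R] M × M} {φ : ℕ → ℕ}
    (hφ : ∀ v, mapMul f g p q (comul p q (ExteriorAlgebra.ιMulti R (p + q) v)) =
      ∑ Q : Finset (Fin (p + q)), φ Q.card • splitWedge v v Q)
    (a : ℕ) {b c d : ℕ} {x y z : ExteriorAlgebra R M} (hx : x ∈ ⋀[R]^(p + q) M)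
    (hy : y ∈ ⋀[R]^c M) (hz : z ∈ ⋀[R]^d M) :
    bidegreeProj a b (mapMul f g p q (comul p q x) * inL y * inR z) =
      φ (b - d) • bidegreeProj a b (diag x * inL y * inR z) := by
  let mulRight : ExteriorAlgebra R (M × M) →ₗ[R] ⋀[R]^a M ⊗[R] ⋀[R]^b M :=
    bidegreeProj a b ∘ₗ LinearMap.mulRight R (inR z) ∘ₗ LinearMap.mulRight R (inL y)
  refine eqOn_exteriorPower (f := mulRight ∘ₗ mapMul f g p q ∘ₗ comul p q)
    (g := φ (b - d) • mulRight ∘ₗ diag.toLinearMap) (fun v => ?_) hx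
  exact (congrArg mulRight (hφ v)).trans (bidegreeProj_sum_smul_splitWedge_mul φ v hy hz)

theorem bidegreeProj_mapMul_inl_inr_comul_mul {p q a b c d : ℕ} (h : q + d = b)
    {x y z : ExteriorAlgebra R M} (hx : x ∈ ⋀[R]^(p + q) M) (hy : y ∈ ⋀[R]^c M)
    (hz : z ∈ ⋀[R]^d M) :
    bidegreeProj a b (mapMul (LinearMap.inl R M M) (LinearMap.inr R M M) p q (comul p q x) *
        inL y * inR z) = bidegreeProj a b (diag x * inL y * inR z) := by
  rw [bidegreeProj_mapMul_comul_mul (φ := fun i => if i = q then 1 else 0) (fun v => ?_) a hx hy hz,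
    if_pos (by omega), one_smul]
  rw [mapMul_inl_inr_comul_ιMulti, Finset.powersetCard_eq_filter, Finset.sum_filter,
    Finset.powerset_univ]
  simp only [ite_smul, one_smul, zero_smul]

theorem bidegreeProj_mapMul_diag_inr_comul_mul {p q : ℕ} (a b : ℕ) {c d : ℕ}
    {x y z : ExteriorAlgebra R M} (hx : x ∈ ⋀[R]^(p + q) M) (hy : y ∈ ⋀[R]^c M)
    (hz : z ∈ ⋀[R]^d M) :
    bidegreeProj a b (mapMul (LinearMap.inl R M M + LinearMap.inr R M M) (LinearMap.inr R M M) p q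
        (comul p q x) * inL y * inR z) =
      (b - d).choose q • bidegreeProj a b (diag x * inL y * inR z) := by
  refine bidegreeProj_mapMul_comul_mul (φ := fun i => i.choose q) (fun v => ?_) a hx hy hz
  rw [mapMul_comul_ιMulti]
  exact sum_powersetCard_map_piecewise_add (ExteriorAlgebra.ιMulti R (p + q)).toMultilinearMap
    (LinearMap.inr R M M ∘ v) (LinearMap.inl R M M ∘ v) q

theorem bidegreeProj_mapMul_diag_inl_comul_mul {p q : ℕ} (a b : ℕ) {c d : ℕ}
    {x y z : ExteriorAlgebra R M} (hx : x ∈ ⋀[R]^(p + q) M) (hy : y ∈ ⋀[R]^c M)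
    (hz : z ∈ ⋀[R]^d M) :
    bidegreeProj a b (mapMul (LinearMap.inl R M M + LinearMap.inr R M M) (LinearMap.inl R M M) p q
        (comul p q x) * inL y * inR z) =
      (p + q - (b - d)).choose q • bidegreeProj a b (diag x * inL y * inR z) := by
  refine bidegreeProj_mapMul_comul_mul (φ := fun i => (p + q - i).choose q) (fun v => ?_) a hx hy hz
  rw [mapMul_comul_ιMulti, add_comm (LinearMap.inl R M M)]
  refine (sum_powersetCard_map_piecewise_add (ExteriorAlgebra.ιMulti R (p + q)).toMultilinearMap
    (LinearMap.inl R M M ∘ v) (LinearMap.inr R M M ∘ v) q).trans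
    (Fintype.sum_bijective compl compl_bijective _ _ fun Q => ?_)
  have hQ : p + q - Qᶜ.card = Q.card := by
    have := card_finset_fin_le Q
    rw [Finset.card_compl, Fintype.card_fin]
    omega
  rw [hQ, splitWedge, Finset.piecewise_compl]
  rfl

end Comultiplication

section Relations

variable {R M : Type*} [CommRing R] [AddCommGroup M] [Module R M]

/-- The submodule of `Λ^a ⊗ Λ^b` generated by the components of the elements `Δ(x) (1 ⊗ w)` with
`x ∈ Λ^i` and `w ∈ Λ^j`. For `i = a + 1` it is the image of `θ_1`. -/
def diagRel (a b i j : ℕ) : Submodule R (⋀[R]^a M ⊗[R] ⋀[R]^b M) :=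
  Submodule.span R {t | ∃ x ∈ ⋀[R]^i M, ∃ w ∈ ⋀[R]^j M, bidegreeProj a b (diag x * inR w) = t}

/-- The submodule of `Λ^a ⊗ Λ^b` generated by the components of the elements
`Δ(x) (1 ⊗ yz) - (-1)^k Δ(x) (y ⊗ z)` with `x ∈ Λ^a`, `y ∈ Λ^k` and `z ∈ Λ^l`. It is the image of
`γ_k`. -/
def gammaRel (a b k l : ℕ) : Submodule R (⋀[R]^a M ⊗[R] ⋀[R]^b M) :=
  Submodule.span R {t | ∃ x ∈ ⋀[R]^a M, ∃ y ∈ ⋀[R]^k M, ∃ z ∈ ⋀[R]^l M,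
    bidegreeProj a b (diag x * inR (y * z)) -
      (-1 : R) ^ k • bidegreeProj a b (diag x * inL y * inR z) = t}

variable {a b i j k l c d r s : ℕ}

theorem bidegreeProj_mem_diagRel {x w : ExteriorAlgebra R M} (hx : x ∈ ⋀[R]^i M)
    (hw : w ∈ ⋀[R]^j M) : bidegreeProj a b (diag x * inR w) ∈ diagRel a b i j :=
  Submodule.subset_span ⟨x, hx, w, hw, rfl⟩

theorem smodEq_gammaRel {x y z : ExteriorAlgebra R M} (hx : x ∈ ⋀[R]^a M) (hy : y ∈ ⋀[R]^k M)
    (hz : z ∈ ⋀[R]^l M) :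
    bidegreeProj a b (diag x * inR (y * z)) ≡
      (-1 : R) ^ k • bidegreeProj a b (diag x * inL y * inR z) [SMOD gammaRel a b k l] :=
  SModEq.sub_mem.2 (Submodule.subset_span ⟨x, hx, y, hy, z, hz, rfl⟩)

theorem diag_mul_inL_ι_mul (u : M) (x : ExteriorAlgebra R M) {y : ExteriorAlgebra R M}
    (hy : y ∈ ⋀[R]^c M) (z : ExteriorAlgebra R M) :
    diag x * inL (ExteriorAlgebra.ι R u * y) * inR z =
      diag (x * ExteriorAlgebra.ι R u) * inL y * inR z -
        (-1 : R) ^ c • (diag x * inL y * inR (ExteriorAlgebra.ι R u * z)) := by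
  have hu : inL (ExteriorAlgebra.ι R u) =
      diag (ExteriorAlgebra.ι R u) - inR (ExteriorAlgebra.ι R u) := by
    simp only [inL, diag, inR, ExteriorAlgebra.map_apply_ι, LinearMap.add_apply, map_add,
      add_sub_cancel_right]
  have huy : inR (ExteriorAlgebra.ι R u) * inL y =
      (-1 : R) ^ c • (inL y * inR (ExteriorAlgebra.ι R u)) := by
    rw [inR, ExteriorAlgebra.map_apply_ι]
    exact ι_mul_comm_of_mem _ (map_mem_exteriorPower _ hy)
  rw [map_mul inL, hu, sub_mul, huy, map_mul diag, map_mul inR]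
  simp only [mul_sub, sub_mul, mul_assoc, mul_smul_comm, smul_mul_assoc]

/-- Modulo the elements `Δ(x') (1 ⊗ w)` with `x'` of higher degree than `x`, one has
`Δ(x) (u ⊗ 1) ≡ -Δ(x) (1 ⊗ u)` for each vector `u`, because `Δ(u) = u ⊗ 1 + 1 ⊗ u`. -/
theorem bidegreeProj_exchange {P : Submodule R (⋀[R]^a M ⊗[R] ⋀[R]^b M)}
    {x y z : ExteriorAlgebra R M} (hx : x ∈ ⋀[R]^i M) (hy : y ∈ ⋀[R]^c M) (hz : z ∈ ⋀[R]^d M)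
    (hP : ∀ i' j', i < i' → d ≤ j' → i' + j' = i + c + d → diagRel a b i' j' ≤ P) :
    bidegreeProj a b (diag x * inL y * inR z) ≡
      (-1 : R) ^ c • bidegreeProj a b (diag x * inR (y * z)) [SMOD P] := by
  induction hy using Submodule.pow_induction_on_left' generalizing i d x z with
  | algebraMap r => simp [Algebra.algebraMap_eq_smul_one]
  | add y y' c _ _ ihy ihy' =>
    simpa only [map_add, mul_add, add_mul, smul_add] using (ihy hx hz hP).add (ihy' hx hz hP)
  | mem_mul m hm c y hy ih =>
    obtain ⟨u, rfl⟩ := hm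
    have hu : ExteriorAlgebra.ι R u ∈ ⋀[R]^1 M :=
      (pow_one (LinearMap.range (ExteriorAlgebra.ι R))).ge ⟨u, rfl⟩
    have hxu : x * ExteriorAlgebra.ι R u ∈ ⋀[R]^(i + 1) M := SetLike.mul_mem_graded hx hu
    have huz : ExteriorAlgebra.ι R u * z ∈ ⋀[R]^(1 + d) M := SetLike.mul_mem_graded hu hz
    have hfirst : bidegreeProj a b (diag (x * ExteriorAlgebra.ι R u) * inL y * inR z) ≡ 0
        [SMOD P] := by
      refine (ih hxu hz fun i' j' hi' hj' h => hP i' j' (by omega) hj' (by omega)).trans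
        (SModEq.zero.2 (P.smul_mem _ ?_))
      exact hP (i + 1) (c + d) (by omega) (by omega) (by omega)
        (bidegreeProj_mem_diagRel hxu (SetLike.mul_mem_graded hy hz))
    have hsecond := ih hx huz fun i' j' hi' hj' h => hP i' j' hi' (by omega) (by omega)
    have huyz : ExteriorAlgebra.ι R u * y * z =
        (-1 : R) ^ c • (y * (ExteriorAlgebra.ι R u * z)) := by
      rw [ι_mul_comm_of_mem u hy, smul_mul_assoc, mul_assoc]
    rw [diag_mul_inL_ι_mul u x hy z, huyz]
    convert hfirst.sub (hsecond.smul ((-1 : R) ^ c)) using 1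
    · rw [map_sub, map_smul]
    · rw [map_smul, mul_smul_comm, map_smul, zero_sub, pow_succ, mul_neg_one, neg_smul]

theorem mapMul_diag_inr_smodEq_gammaRel (hk : s + r = k) {y z : ExteriorAlgebra R M}
    (hy : y ∈ ⋀[R]^r M) (hz : z ∈ ⋀[R]^l M) (t : ⋀[R]^a M ⊗[R] ⋀[R]^s M) :
    bidegreeProj a b (mapMul (LinearMap.inl R M M + LinearMap.inr R M M) (LinearMap.inr R M M) a s
        t * inR (y * z)) ≡
      (-1 : R) ^ k • bidegreeProj a b (mapMul (LinearMap.inl R M M + LinearMap.inr R M M)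
        (LinearMap.inl R M M) a s t * inL y * inR z) [SMOD gammaRel a b k l] := by
  induction t using TensorProduct.induction_on with
  | zero => simp
  | add t t' ht ht' => simpa only [map_add, add_mul, smul_add] using ht.add ht'
  | tmul x x' =>
    have h := smodEq_gammaRel (b := b) x.2 (hk ▸ SetLike.mul_mem_graded x'.2 hy) hz
    rwa [map_mul inL, mul_assoc (x' : ExteriorAlgebra R M), map_mul inR, ← mul_assoc,
      ← mul_assoc] at h

theorem bidegreeProj_diag_smodEq_gammaRel (hk : s + r = k) (hb : k + l = b)
    {x y z : ExteriorAlgebra R M} (hx : x ∈ ⋀[R]^(a + s) M) (hy : y ∈ ⋀[R]^r M)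
    (hz : z ∈ ⋀[R]^l M) :
    bidegreeProj a b (diag x * inR (y * z)) ≡
      ((-1 : R) ^ k * (a + s - k).choose s) • bidegreeProj a b (diag x * inL y * inR z)
        [SMOD gammaRel a b k l] := by
  have h := mapMul_diag_inr_smodEq_gammaRel (b := b) hk hy hz (comul a s x)
  have hright := bidegreeProj_mapMul_diag_inr_comul_mul a b hx (SetLike.one_mem_graded _)
    (SetLike.mul_mem_graded hy hz)
  rw [map_one, mul_one, mul_one, show b - (r + l) = s by omega, Nat.choose_self, one_smul] at hright
  rwa [hright, bidegreeProj_mapMul_diag_inl_comul_mul a b hx hy hz, Nat.sub_eq_of_eq_add hb.symm,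
    ← Nat.cast_smul_eq_nsmul R, smul_smul] at h

theorem map_map_mem_diagRel (f : M →ₗ[R] M) {t : ⋀[R]^a M ⊗[R] ⋀[R]^b M}
    (ht : t ∈ diagRel a b i j) :
    TensorProduct.map (exteriorPower.map a f) (exteriorPower.map b f) t ∈ diagRel a b i j := by
  induction ht using Submodule.span_induction with
  | zero => simp
  | add s t _ _ hs ht => simpa only [map_add] using add_mem hs ht
  | smul c t _ ht => simpa only [map_smul] using Submodule.smul_mem _ c ht
  | mem t ht =>
    obtain ⟨x, hx, w, hw, rfl⟩ := ht
    rw [← bidegreeProj_map_prodMap, map_mul, map_prodMap_diag, map_prodMap_inR]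
    exact bidegreeProj_mem_diagRel (map_mem_exteriorPower f hx) (map_mem_exteriorPower f hw)

end Relations

section RelationsOverField

variable {K M : Type*} [Field K] [AddCommGroup M] [Module K M] {a b i j k l r s t : ℕ}

theorem diagRel_add_le_diagRel [CharZero K] (h : t + j ≤ b) :
    diagRel (R := K) (M := M) a b (i + t) j ≤ diagRel a b i (t + j) := by
  refine Submodule.span_le.2 ?_
  rintro _ ⟨x, hx, w, hw, rfl⟩
  have hmem (T : ⋀[K]^i M ⊗[K] ⋀[K]^t M) :
      bidegreeProj a b (mapMul (LinearMap.inl K M M + LinearMap.inr K M M) (LinearMap.inr K M M) i t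
        T * inR w) ∈ diagRel a b i (t + j) := by
    induction T using TensorProduct.induction_on with
    | zero => simp
    | add T T' hT hT' => simpa only [map_add, add_mul] using add_mem hT hT'
    | tmul y z =>
      have := bidegreeProj_mem_diagRel (a := a) (b := b) y.2 (SetLike.mul_mem_graded z.2 hw)
      rwa [map_mul inR, ← mul_assoc] at this
  have hcomul := bidegreeProj_mapMul_diag_inr_comul_mul a b hx (SetLike.one_mem_graded _) hw
  rw [map_one, mul_one, mul_one, ← Nat.cast_smul_eq_nsmul K] at hcomul
  refine (Submodule.smul_mem_iff _ ?_).1 (hcomul ▸ hmem (comul i t x))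
  exact Nat.cast_ne_zero.2 (Nat.choose_pos (Nat.le_sub_of_add_le h)).ne'

theorem gammaRel_le_diagRel [CharZero K] (hb : k + l = b) (hj : 1 + j = b) :
    gammaRel (R := K) (M := M) a b k l ≤ diagRel a b (a + 1) j := by
  refine Submodule.span_le.2 ?_
  rintro _ ⟨x, hx, y, hy, z, hz, rfl⟩
  rw [SetLike.mem_coe, ← SModEq.sub_mem]
  have h := bidegreeProj_exchange (P := diagRel a b (a + 1) j) hx hy hz fun i' j' hi' _ hij' => by
    obtain ⟨t, rfl⟩ : ∃ t, i' = a + 1 + t := Nat.exists_eq_add_of_le hi'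
    obtain rfl : j = t + j' := by omega
    exact diagRel_add_le_diagRel (by omega)
  have h' := h.symm.smul ((-1 : K) ^ k)
  rw [smul_smul, ← pow_add, Even.neg_one_pow ⟨k, rfl⟩, one_smul] at h'
  exact h'

theorem bidegreeProj_mem_gammaRel_of_diagRel_le (hk : s + r = k) (hb : k + l = b)
    (hs : 1 - (-1 : K) ^ s * (a + s - k).choose s ≠ 0)
    (hle : ∀ i' j', a + s < i' → l ≤ j' → i' + j' = a + s + r + l →
      diagRel (R := K) (M := M) a b i' j' ≤ gammaRel a b k l)
    {x y z : ExteriorAlgebra K M} (hx : x ∈ ⋀[K]^(a + s) M) (hy : y ∈ ⋀[K]^r M)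
    (hz : z ∈ ⋀[K]^l M) :
    bidegreeProj a b (diag x * inR (y * z)) ∈ gammaRel a b k l := by
  have h := (bidegreeProj_diag_smodEq_gammaRel hk hb hx hy hz).trans
    ((bidegreeProj_exchange hx hy hz hle).smul _)
  have hsign : (-1 : K) ^ k * (a + s - k).choose s * (-1) ^ r =
      (-1) ^ s * (a + s - k).choose s := by
    rw [← hk, mul_right_comm, pow_add, mul_assoc ((-1 : K) ^ s), ← pow_add,
      Even.neg_one_pow ⟨r, rfl⟩, mul_one]
  rw [smul_smul, hsign] at h
  refine (Submodule.smul_mem_iff _ hs).1 ?_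
  rw [sub_smul, one_smul]
  exact SModEq.sub_mem.1 h

theorem diagRel_le_gammaRel (hb : k + l = b)
    (hne : ∀ s, 1 ≤ s → s ≤ k →
      ⋀[K]^(a + s) M = ⊥ ∨ 1 - (-1 : K) ^ s * (a + s - k).choose s ≠ 0)
    (hk : s + r = k) (hs : 1 ≤ s) :
    diagRel (R := K) (M := M) a b (a + s) (r + l) ≤ gammaRel a b k l := by
  induction r using Nat.strong_induction_on generalizing s with
  | _ r ih =>
    refine Submodule.span_le.2 ?_
    rintro _ ⟨x, hx, w, hw, rfl⟩
    obtain hbot | hs' := hne s hs (by omega)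
    · obtain rfl : x = 0 := by rwa [hbot, Submodule.mem_bot] at hx
      simp
    · have hw' : w ∈ ⋀[K]^r M * ⋀[K]^l M := by rwa [← pow_add]
      refine Submodule.mul_induction_on hw' (fun y hy z hz => ?_) fun w w' h h' => ?_
      · refine bidegreeProj_mem_gammaRel_of_diagRel_le hk hb hs'
          (fun i' j' hi' hj' h => ?_) hx hy hz
        obtain ⟨s', rfl⟩ : ∃ s', i' = a + s' := ⟨i' - a, by omega⟩
        obtain ⟨r', rfl⟩ : ∃ r', j' = r' + l := ⟨j' - l, by omega⟩
        exact ih r' (by omega) (by omega) (by omega)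
      · simpa only [map_add, mul_add, SetLike.mem_coe] using add_mem h h'

end RelationsOverField

theorem one_sub_neg_one_pow_mul_choose_ne_zero (K : Type*) [Field K] [CharZero K] {a k s : ℕ}
    (hs : 1 ≤ s) (h : k < a ∨ Odd s) : 1 - (-1 : K) ^ s * (a + s - k).choose s ≠ 0 := by
  obtain hodd | heven := s.even_or_odd.symm
  · rw [hodd.neg_one_pow, neg_one_mul, sub_neg_eq_add, add_comm]
    exact Nat.cast_add_one_ne_zero _
  · have hka : k < a := h.resolve_right (Nat.not_odd_iff_even.2 heven)
    have hchoose : 1 < (a + s - k).choose s := calc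
      1 < (1 + s).choose s := by rw [add_comm, Nat.choose_succ_self_right]; omega
      _ ≤ (a + s - k).choose s := Nat.choose_le_choose s (by omega)
    rw [heven.neg_one_pow, one_mul, sub_ne_zero]
    exact_mod_cast hchoose.ne

section EqualDegrees

variable {R M : Type*} [CommRing R] [AddCommGroup M] [Module R M] {a b : ℕ}

theorem mapMul_inl_inr_comul_zero_right {x : ExteriorAlgebra R M} (hx : x ∈ ⋀[R]^a M) :
    mapMul (LinearMap.inl R M M) (LinearMap.inr R M M) a 0 (comul a 0 x) = inL x := by
  refine eqOn_exteriorPower (f := mapMul (LinearMap.inl R M M) (LinearMap.inr R M M) a 0 ∘ₗ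
    comul a 0) (g := inL.toLinearMap) (fun v => ?_) hx
  refine (mapMul_inl_inr_comul_ιMulti (p := a) (q := 0) v).trans ?_
  rw [Finset.powersetCard_zero, Finset.sum_singleton, splitWedge, Finset.piecewise_empty]
  exact (ExteriorAlgebra.map_apply_ιMulti _ _).symm

theorem mapMul_inl_inr_comul_zero_left {x : ExteriorAlgebra R M} (hx : x ∈ ⋀[R]^(0 + b) M) :
    mapMul (LinearMap.inl R M M) (LinearMap.inr R M M) 0 b (comul 0 b x) = inR x := by
  refine eqOn_exteriorPower (f := mapMul (LinearMap.inl R M M) (LinearMap.inr R M M) 0 b ∘ₗ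
    comul 0 b) (g := inR.toLinearMap) (fun v => ?_) hx
  refine (mapMul_inl_inr_comul_ιMulti (p := 0) (q := b) v).trans ?_
  have huniv : Finset.powersetCard b (Finset.univ : Finset (Fin (0 + b))) = {Finset.univ} := by
    simpa using Finset.powersetCard_self (Finset.univ : Finset (Fin (0 + b)))
  rw [huniv, Finset.sum_singleton, splitWedge, Finset.piecewise_univ]
  exact (ExteriorAlgebra.map_apply_ιMulti _ _).symm

theorem bidegreeProj_diag_mul_inR (x : ⋀[R]^a M) (y : ⋀[R]^b M) :
    bidegreeProj a b (diag x * inR y) = (x : ⋀[R]^a M) ⊗ₜ y := by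
  have h := bidegreeProj_mapMul_inl_inr_comul_mul (p := a) (q := 0) (a := a) (zero_add b) x.2
    (SetLike.one_mem_graded _) y.2
  rw [mapMul_inl_inr_comul_zero_right x.2, map_one, mul_one, mul_one, bidegreeProj_inL_mul_inR,
    degreeProj_coe, degreeProj_coe] at h
  exact h.symm

theorem bidegreeProj_diag_mul_inL (x : ⋀[R]^b M) (y : ⋀[R]^a M) :
    bidegreeProj a b (diag x * inL y) = (-1 : R) ^ (b * a) • (y : ⋀[R]^a M) ⊗ₜ x := by
  have hx : (x : ExteriorAlgebra R M) ∈ ⋀[R]^(0 + b) M := (zero_add b).symm ▸ x.2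
  have h := bidegreeProj_mapMul_inl_inr_comul_mul (a := a) (add_zero b) hx y.2
    (SetLike.one_mem_graded _)
  rw [mapMul_inl_inr_comul_zero_left hx, map_one, mul_one, mul_one, inR_mul_inL x.2 y.2, map_smul,
    bidegreeProj_inL_mul_inR, degreeProj_coe, degreeProj_coe] at h
  exact h.symm

theorem neg_one_pow_mul_self (R : Type*) [Ring R] (k : ℕ) : (-1 : R) ^ (k * k) = (-1) ^ k :=
  neg_one_pow_congr (by simp [Nat.even_mul])

theorem gammaRel_self_le_ker_comm_add_id :
    gammaRel (R := R) (M := M) a a a 0 ≤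
      LinearMap.ker ((TensorProduct.comm R (⋀[R]^a M) (⋀[R]^a M)).toLinearMap + LinearMap.id) := by
  refine Submodule.span_le.2 ?_
  rintro _ ⟨x, hx, y, hy, z, hz, rfl⟩
  obtain ⟨c, rfl⟩ := Submodule.mem_one.1 ((pow_zero (LinearMap.range (ExteriorAlgebra.ι R))).le hz)
  lift x to ⋀[R]^a M using hx
  lift y to ⋀[R]^a M using hy
  have hgen : bidegreeProj a a (diag x * inR (y.1 * algebraMap R (ExteriorAlgebra R M) c)) -
      (-1 : R) ^ a • bidegreeProj a a (diag x * inL y * inR (algebraMap R _ c)) =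
      c • ((x : ⋀[R]^a M) ⊗ₜ y - (y : ⋀[R]^a M) ⊗ₜ x) := by
    simp only [Algebra.algebraMap_eq_smul_one, map_smul, map_one, mul_smul_comm, mul_one,
      bidegreeProj_diag_mul_inR, bidegreeProj_diag_mul_inL, neg_one_pow_mul_self]
    rw [smul_comm, smul_smul ((-1 : R) ^ a), ← pow_add, Even.neg_one_pow ⟨a, rfl⟩, one_smul,
      smul_sub]
  rw [hgen]
  simp

theorem map_eq_zero_of_mem_gammaRel_self (f g : M →ₗ[R] M)
    {t : ⋀[R]^a M ⊗[R] ⋀[R]^a M} (ht : t ∈ gammaRel a a a 0)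
    (h : TensorProduct.map (exteriorPower.map a f) (exteriorPower.map a g) t = 0) :
    TensorProduct.map (exteriorPower.map a g) (exteriorPower.map a f) t = 0 := by
  have hcomm : TensorProduct.comm R _ _ t + t = 0 := gammaRel_self_le_ker_comm_add_id ht
  rw [eq_neg_of_add_eq_zero_right hcomm, map_neg, TensorProduct.map_comm, h, map_zero, neg_zero]

theorem map_prodMap_diag_ιMulti {m : ℕ} {P : M →ₗ[R] M} {v : Fin m → M} (hv : P ∘ v = v) :
    ExteriorAlgebra.map (P.prodMap LinearMap.id) (diag (ExteriorAlgebra.ιMulti R m v)) =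
      diag (ExteriorAlgebra.ιMulti R m v) := by
  simp only [diag, ExteriorAlgebra.map_apply_ιMulti]
  congr 1
  ext i
  · simpa using congrFun hv i
  · simp

theorem map_id_prodMap_inR_ιMulti {m : ℕ} {P : M →ₗ[R] M} {w : Fin m → M}
    (hw : ∃ i, P (w i) = 0) :
    ExteriorAlgebra.map (LinearMap.id.prodMap P) (inR (ExteriorAlgebra.ιMulti R m w)) = 0 := by
  obtain ⟨i, hi⟩ := hw
  rw [map_prodMap_inR, ExteriorAlgebra.map_apply_ιMulti,
    (ExteriorAlgebra.ιMulti R m).map_coord_zero i hi, map_zero]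

/-- The generator `t` of the left hand side of `hle` given by `v ∧ u` and `w` is killed
by `1 ⊗ P`, as `w` is. If `t` is antisymmetric, then `P ⊗ 1` kills it as well, but `P ⊗ 1` maps it
to `v ⊗ (u ∧ w)`. -/
theorem tmul_eq_zero_of_diagRel_le_gammaRel {j : ℕ}
    (hle : diagRel (R := R) (M := M) (j + 1) (j + 1) (j + 2) j ≤ gammaRel (j + 1) (j + 1) (j + 1) 0)
    {P : M →ₗ[R] M} {u : M} {v : Fin (j + 1) → M} {w : Fin j → M} (hu : P u = 0)
    (hv : P ∘ v = v) (hw : ∃ i, P (w i) = 0) :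
    exteriorPower.ιMulti R (j + 1) v ⊗ₜ[R] exteriorPower.ιMulti R (j + 1) (Fin.cons u w) = 0 := by
  have hvu : ExteriorAlgebra.ιMulti R (j + 1) v * ExteriorAlgebra.ι R u ∈ ⋀[R]^(j + 1 + 1) M :=
    SetLike.mul_mem_graded (exteriorPower.ιMulti R (j + 1) v).2
      ((pow_one (LinearMap.range (ExteriorAlgebra.ι R))).ge ⟨u, rfl⟩)
  have ht := hle (bidegreeProj_mem_diagRel hvu (exteriorPower.ιMulti R j w).2)
  rw [exteriorPower.ιMulti_apply_coe] at ht
  have hright : TensorProduct.map (exteriorPower.map (j + 1) LinearMap.id)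
      (exteriorPower.map (j + 1) P) (bidegreeProj (j + 1) (j + 1)
        (diag (ExteriorAlgebra.ιMulti R (j + 1) v * ExteriorAlgebra.ι R u) *
          inR (ExteriorAlgebra.ιMulti R j w))) = 0 := by
    rw [← bidegreeProj_map_prodMap, map_mul (ExteriorAlgebra.map _), map_id_prodMap_inR_ιMulti hw,
      mul_zero, map_zero]
  have hleft := map_eq_zero_of_mem_gammaRel_self _ _ ht hright
  have hdiag : ExteriorAlgebra.map (P.prodMap LinearMap.id) (diag (ExteriorAlgebra.ι R u)) =
      inR (ExteriorAlgebra.ι R u) := by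
    simp [diag, inR, hu]
  have hcons : ExteriorAlgebra.ι R u * ExteriorAlgebra.ιMulti R j w =
      exteriorPower.ιMulti R (j + 1) (Fin.cons u w) := by
    rw [exteriorPower.ιMulti_apply_coe, ExteriorAlgebra.ιMulti_succ_apply]
    rfl
  rwa [← bidegreeProj_map_prodMap, map_mul diag, map_mul (ExteriorAlgebra.map _),
    map_mul (ExteriorAlgebra.map _), map_prodMap_diag_ιMulti hv, hdiag, map_prodMap_inR,
    ExteriorAlgebra.map_id, AlgHom.id_apply, mul_assoc, ← map_mul inR, hcons,
    ← exteriorPower.ιMulti_apply_coe, bidegreeProj_diag_mul_inR] at hleft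

end EqualDegrees

section LinearlyIndependent

variable {K M : Type*} [Field K] [AddCommGroup M] [Module K M]

theorem ιMulti_ne_zero {m : ℕ} {v : Fin m → M} (hv : LinearIndependent K v) :
    exteriorPower.ιMulti K m v ≠ 0 := by
  let s := Set.powersetCard.ofFinEmbEquiv (RelEmbedding.refl (α := Fin m) (· ≤ ·))
  have h := (exteriorPower.ιMulti_family_linearIndependent_field (n := m) hv).ne_zero s
  rw [exteriorPower.ιMulti_family] at h
  simpa [s] using h

theorem exists_linearMap_apply_eq {ι N : Type*} [AddCommGroup N] [Module K N] {u : ι → M}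
    (hu : LinearIndependent K u) (w : ι → N) : ∃ f : M →ₗ[K] N, ∀ i, f (u i) = w i := by
  obtain ⟨f, hf⟩ := LinearMap.exists_extend ((Module.Basis.span hu).constr K w)
  refine ⟨f, fun i => ?_⟩
  have h := LinearMap.congr_fun hf (Module.Basis.span hu i)
  rwa [Module.Basis.constr_basis, LinearMap.comp_apply, Submodule.subtype_apply,
    Module.Basis.span_apply] at h

theorem tmul_ne_zero {N : Type*} [AddCommGroup N] [Module K N] {x : M} {y : N} (hx : x ≠ 0)
    (hy : y ≠ 0) : x ⊗ₜ[K] y ≠ 0 :=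
  ((LinearIndependent.of_subsingleton (v := fun _ : Unit => x) () hx).tmul_of_isDomain
    (LinearIndependent.of_subsingleton (v := fun _ : Unit => y) () hy)).ne_zero ((), ())

theorem not_diagRel_le_gammaRel {j : ℕ} (hj : 1 ≤ j) (hM : j + 3 ≤ Module.finrank K M) :
    ¬ diagRel (R := K) (M := M) (j + 1) (j + 1) (j + 2) j ≤ gammaRel (j + 1) (j + 1) (j + 1) 0 := by
  intro hle
  obtain ⟨u, hu⟩ := exists_linearIndependent_of_le_finrank hM
  obtain ⟨P, hP⟩ := exists_linearMap_apply_eq hu fun i =>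
    if i = 0 ∨ i = Fin.last (j + 2) then 0 else u i
  have hv : LinearIndependent K fun i : Fin (j + 1) => u i.succ.castSucc :=
    hu.comp (fun i : Fin (j + 1) => i.succ.castSucc) fun i i' h => by simpa using h
  have hw : LinearIndependent K (Fin.cons (u 0) fun i : Fin j => u (i.addNat 3)) := by
    have hinj : Function.Injective (Fin.cons 0 fun i : Fin j => i.addNat 3) :=
      Fin.cons_injective_iff.2 ⟨by simp [Fin.ext_iff], fun i i' h => by simpa [Fin.ext_iff] using h⟩
    convert hu.comp _ hinj using 1
    exact funext (Fin.cases rfl fun i => rfl)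
  refine tmul_ne_zero (ιMulti_ne_zero hv) (ιMulti_ne_zero hw)
    (tmul_eq_zero_of_diagRel_le_gammaRel hle (P := P) (by simp [hP]) (funext fun i => ?_)
      ⟨⟨j - 1, by omega⟩, ?_⟩)
  · rw [Function.comp_apply, hP, if_neg]
    exact not_or.2 ⟨Fin.castSucc_ne_zero_iff.2 i.succ_ne_zero, Fin.castSucc_ne_last _⟩
  · have hlast : (⟨j - 1, by omega⟩ : Fin j).addNat 3 = Fin.last (j + 2) :=
      Fin.ext (by change j - 1 + 3 = j + 2; omega)
    rw [hlast, hP, if_pos (Or.inr rfl)]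

end LinearlyIndependent

section Kernel

variable {K M : Type*} [Field K] [AddCommGroup M] [Module K M]

theorem exteriorPower_eq_bot_of_finrank_lt [Module.Finite K M] {m : ℕ}
    (h : Module.finrank K M < m) : ⋀[K]^m M = ⊥ :=
  Submodule.finrank_eq_zero.1 ((exteriorPower.finrank_eq K m).trans (Nat.choose_eq_zero_of_lt h))

theorem gammaRel_eq_diagRel_iff [CharZero K] [Module.Finite K M] {a b k l j : ℕ} (hba : b ≤ a)
    (hk1 : 1 ≤ k) (hb : k + l = b) (hj : 1 + j = b) :
    gammaRel (R := K) (M := M) a b k l = diagRel a b (a + 1) j ↔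
      k < a ∨ a = 1 ∨ Module.finrank K M ≤ a + 1 := by
  constructor
  · intro heq
    by_contra! hcon
    obtain ⟨hak, ha1, hM⟩ := hcon
    obtain rfl : l = 0 := by omega
    obtain rfl : b = j + 1 := by omega
    obtain rfl : k = j + 1 := by omega
    obtain rfl : a = j + 1 := by omega
    exact not_diagRel_le_gammaRel (by omega) hM heq.ge
  · intro hcase
    obtain ⟨r, rfl⟩ : ∃ r, k = 1 + r := Nat.exists_eq_add_of_le hk1
    obtain rfl : j = r + l := by omega
    refine (gammaRel_le_diagRel hb hj).antisymm (diagRel_le_gammaRel hb (fun s hs hsk => ?_) rfl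
      le_rfl)
    by_cases hM : Module.finrank K M < a + s
    · exact Or.inl (exteriorPower_eq_bot_of_finrank_lt hM)
    · refine Or.inr (one_sub_neg_one_pow_mul_choose_ne_zero K hs
        (or_iff_not_imp_left.2 fun hka => ?_))
      obtain rfl : s = 1 := by omega
      exact odd_one

end Kernel

section StructureMaps

variable {K : Type} [Field K] {n : ℕ}

theorem coe_ecast {p q : ℕ} (h : p = q) (x : Lam K n p) :
    (ecast K n h x : ExteriorAlgebra K (V K n)) = x := by
  subst h
  rfl

theorem congr_ecast_bidegreeProj {p p' q q' : ℕ} (hp : p = p') (hq : q = q')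
    (T : ExteriorAlgebra K (V K n × V K n)) :
    TensorProduct.congr (ecast K n hp) (ecast K n hq) (bidegreeProj p q T) =
      bidegreeProj p' q' T := by
  subst hp hq
  exact LinearMap.congr_fun TensorProduct.map_id _

variable {mf : ∀ p q : ℕ, Lam K n p ⊗[K] Lam K n q →ₗ[K] Lam K n (p + q)}
variable {Df : ∀ p q : ℕ, Lam K n (p + q) →ₗ[K] Lam K n p ⊗[K] Lam K n q}

theorem coe_mulMap (hmf : ∀ p q, IsMulMap K n p q (mf p q)) {p q : ℕ} (x : Lam K n p)
    (y : Lam K n q) : (mf p q (x ⊗ₜ y) : ExteriorAlgebra K (V K n)) = x * y := by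
  have h : Submodule.subtype _ ∘ₗ mf p q =
      LinearMap.mul' K _ ∘ₗ TensorProduct.map (Submodule.subtype _) (Submodule.subtype _) := by
    refine TensorProduct.ext (exteriorPower.linearMap_ext (AlternatingMap.ext fun v =>
      exteriorPower.linearMap_ext (AlternatingMap.ext fun w => ?_)))
    exact (congrArg Subtype.val (hmf p q v w)).trans (ExteriorAlgebra.ιMulti_mul_ιMulti v w).symm
  exact LinearMap.congr_fun h (x ⊗ₜ y)

theorem comulMap_apply (hDf : ∀ p q, IsComulMap K n p q (Df p q)) {p q : ℕ}
    (x : Lam K n (p + q)) : Df p q x = comul p q (x : ExteriorAlgebra K (V K n)) := by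
  suffices h : Df p q = comul p q ∘ₗ Submodule.subtype _ from LinearMap.congr_fun h x
  refine exteriorPower.linearMap_ext (AlternatingMap.ext fun v => (hDf p q v).trans ?_)
  calc
    _ = ∑ σ ∈ shuffles p q, bidegreeProj p q (splitWedge (R := K) v v (lastValues σ)) := by
      refine Finset.sum_congr rfl fun σ _ => ?_
      rw [splitWedge_lastValues, map_zsmul, bidegreeProj_inL_mul_inR]
      exact congrArg _ (congrArg₂ _ (degreeProj_coe (wedge K n _)).symm
        (degreeProj_coe (wedge K n _)).symm)
    _ = bidegreeProj p q (mapMul (LinearMap.inl K _ _) (LinearMap.inr K _ _) p q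
        (comul p q (ExteriorAlgebra.ιMulti K (p + q) v))) := by
      rw [sum_shuffles_lastValues fun Q => bidegreeProj p q (splitWedge v v Q),
        mapMul_inl_inr_comul_ιMulti, map_sum]
    _ = _ := bidegreeProj_mapMul _

theorem ecast_mulMap (hmf : ∀ p q, IsMulMap K n p q (mf p q)) {p q m : ℕ} (h : p + q = m)
    (x : Lam K n p) (y : Lam K n q) :
    ecast K n h (mf p q (x ⊗ₜ y)) = degreeProj K (V K n) m (x * y) := by
  rw [← coe_mulMap hmf, ← coe_ecast h, degreeProj_coe]

theorem thetaMap_tmul (hmf : ∀ p q, IsMulMap K n p q (mf p q))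
    (hDf : ∀ p q, IsComulMap K n p q (Df p q)) {a b t : ℕ} (ht : t ≤ a) (x : Lam K n a)
    (z : Lam K n b) :
    thetaMap K n mf Df a b t ht (x ⊗ₜ z) = bidegreeProj (a - t) (b + t) (diag x * inR z) := by
  have key (T : Lam K n (a - t) ⊗[K] Lam K n t) :
      TensorProduct.map LinearMap.id ((ecast K n (add_comm t b)).toLinearMap ∘ₗ mf t b)
        (TensorProduct.assoc K _ _ _ (T ⊗ₜ z)) =
      bidegreeProj (a - t) (b + t)
        (mapMul (LinearMap.inl K _ _) (LinearMap.inr K _ _) (a - t) t T * inR z) := by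
    induction T using TensorProduct.induction_on with
    | zero => simp
    | add T T' hT hT' => simp only [TensorProduct.add_tmul, map_add, add_mul, hT, hT']
    | tmul p q =>
      have hpq := bidegreeProj_inL_mul_inR (a - t) (b + t) p.1 (q.1 * z.1)
      rw [map_mul inR, ← mul_assoc, degreeProj_coe, ← ecast_mulMap hmf (add_comm t b)] at hpq
      exact hpq.symm
  have hx : (x : ExteriorAlgebra K (V K n)) ∈ ⋀[K]^(a - t + t) (V K n) :=
    (Nat.sub_add_cancel ht).symm ▸ x.2
  have h := bidegreeProj_mapMul_inl_inr_comul_mul (a := a - t) (add_comm t b) hx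
    (SetLike.one_mem_graded _) z.2
  rw [map_one, mul_one, mul_one, ← coe_ecast (Nat.sub_add_cancel ht).symm x, ← comulMap_apply hDf,
    ← key, coe_ecast] at h
  exact h

theorem pairMul_tmul (hmf : ∀ p q, IsMulMap K n p q (mf p q)) {p q r s : ℕ}
    (T : Lam K n p ⊗[K] Lam K n q) (y : Lam K n r) (z : Lam K n s) :
    pairMul K n mf p q r s (T ⊗ₜ (y ⊗ₜ z)) = (-1 : K) ^ (q * r) •
      bidegreeProj (p + r) (q + s)
        (mapMul (LinearMap.inl K _ _) (LinearMap.inr K _ _) p q T * inL y * inR z) := by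
  induction T using TensorProduct.induction_on with
  | zero => simp
  | add T T' hT hT' => simp only [TensorProduct.add_tmul, map_add, add_mul, smul_add, hT, hT']
  | tmul u v =>
    have huv : bidegreeProj (p + r) (q + s) (inL (u.1 * y.1) * inR (v.1 * z.1)) =
        mf p r (u ⊗ₜ y) ⊗ₜ mf q s (v ⊗ₜ z) := by
      rw [bidegreeProj_inL_mul_inR, ← coe_mulMap hmf, ← coe_mulMap hmf, degreeProj_coe,
        degreeProj_coe]
    have hmap : mapMul (LinearMap.inl K _ _) (LinearMap.inr K _ _) p q (u ⊗ₜ v) * inL y.1 =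
        (-1 : K) ^ (q * r) • (inL (u.1 * y.1) * inR v.1) := by
      rw [mapMul_tmul, map_mul inL, mul_assoc, mul_assoc, ← mul_smul_comm]
      exact congrArg _ (inR_mul_inL v.2 y.2)
    rw [hmap, smul_mul_assoc, map_smul, smul_smul, ← pow_add, Even.neg_one_pow ⟨_, rfl⟩, one_smul,
      mul_assoc, ← map_mul inR, huv]
    rfl

theorem betaMap_tmul (hmf : ∀ p q, IsMulMap K n p q (mf p q))
    (hDf : ∀ p q, IsComulMap K n p q (Df p q)) {a b k : ℕ} (hka : k ≤ a) (hkb : k ≤ b)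
    (x : Lam K n a) (y : Lam K n k) (z : Lam K n (b - k)) :
    betaMap K n mf Df a b k hka hkb (x ⊗ₜ (y ⊗ₜ z)) =
      (-1 : K) ^ k • bidegreeProj a b (diag x * inL y * inR z) := by
  have hx : (x : ExteriorAlgebra K (V K n)) ∈ ⋀[K]^(a - k + k) (V K n) :=
    (Nat.sub_add_cancel hka).symm ▸ x.2
  rw [← bidegreeProj_mapMul_inl_inr_comul_mul (Nat.add_sub_cancel' hkb) hx y.2 z.2,
    ← congr_ecast_bidegreeProj (Nat.sub_add_cancel hka) (Nat.add_sub_cancel' hkb), ← map_smul,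
    ← coe_ecast (Nat.sub_add_cancel hka).symm x, ← comulMap_apply hDf,
    ← neg_one_pow_mul_self, ← pairMul_tmul hmf]
  rfl

theorem gammaMap_tmul (hmf : ∀ p q, IsMulMap K n p q (mf p q))
    (hDf : ∀ p q, IsComulMap K n p q (Df p q)) {a b k : ℕ} (hka : k ≤ a) (hkb : k ≤ b)
    (x : Lam K n a) (y : Lam K n k) (z : Lam K n (b - k)) :
    gammaMap K n mf Df a b k hka hkb (x ⊗ₜ (y ⊗ₜ z)) =
      bidegreeProj a b (diag x * inR (y.1 * z.1)) -
        (-1 : K) ^ k • bidegreeProj a b (diag x * inL y * inR z) := by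
  rw [← betaMap_tmul hmf hDf hka hkb, ← coe_mulMap hmf,
    ← coe_ecast (Nat.add_sub_cancel' hkb), bidegreeProj_diag_mul_inR]
  rfl

theorem schurRel_eq_diagRel (hmf : ∀ p q, IsMulMap K n p q (mf p q))
    (hDf : ∀ p q, IsComulMap K n p q (Df p q)) {a b : ℕ} (hb : 1 ≤ b) :
    schurRel K n mf Df a b = diagRel a b (a + 1) (b - 1) := by
  have htmul (x : Lam K n (a + 1)) (z : Lam K n (b - 1)) :
      theta1 K n mf Df a b hb (x ⊗ₜ z) = bidegreeProj a b (diag x * inR z) := by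
    rw [theta1, LinearMap.comp_apply, thetaMap_tmul hmf hDf]
    exact congr_ecast_bidegreeProj _ _ _
  rw [schurRel, dif_pos hb]
  apply le_antisymm
  · rintro _ ⟨t, rfl⟩
    induction t using TensorProduct.induction_on with
    | zero => simp
    | add s t hs ht => simpa only [map_add] using add_mem hs ht
    | tmul x z => exact htmul x z ▸ bidegreeProj_mem_diagRel x.2 z.2
  · refine Submodule.span_le.2 ?_
    rintro _ ⟨x, hx, z, hz, rfl⟩
    exact ⟨_, htmul ⟨x, hx⟩ ⟨z, hz⟩⟩

theorem range_gammaMap (hmf : ∀ p q, IsMulMap K n p q (mf p q))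
    (hDf : ∀ p q, IsComulMap K n p q (Df p q)) {a b k : ℕ} (hka : k ≤ a) (hkb : k ≤ b) :
    LinearMap.range (gammaMap K n mf Df a b k hka hkb) = gammaRel a b k (b - k) := by
  apply le_antisymm
  · rintro _ ⟨t, rfl⟩
    induction t using TensorProduct.induction_on with
    | zero => simp
    | add s t hs ht => simpa only [map_add] using add_mem hs ht
    | tmul x w =>
      induction w using TensorProduct.induction_on with
      | zero => simp
      | add w w' hw hw' => simpa only [TensorProduct.tmul_add, map_add] using add_mem hw hw'
      | tmul y z =>
        rw [gammaMap_tmul hmf hDf]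
        exact Submodule.subset_span ⟨x, x.2, y, y.2, z, z.2, rfl⟩
  · refine Submodule.span_le.2 ?_
    rintro _ ⟨x, hx, y, hy, z, hz, rfl⟩
    exact ⟨_, gammaMap_tmul hmf hDf hka hkb ⟨x, hx⟩ ⟨y, hy⟩ ⟨z, hz⟩⟩

end StructureMaps

section Equivariance

variable {K : Type} [Field K]

theorem rhoT_mem_diagRel {n : ℕ} {rho : ∀ p : ℕ, GLn K n → (Lam K n p →ₗ[K] Lam K n p)}
    (hrho : IsExtAction K n rho) {a b i j : ℕ} (g : GLn K n) {t : Lam K n a ⊗[K] Lam K n b}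
    (ht : t ∈ diagRel a b i j) : rhoT K n rho a b g t ∈ diagRel a b i j := by
  have hmap (p : ℕ) : rho p g = exteriorPower.map p (Matrix.toLin' g.1) :=
    exteriorPower.linearMap_ext (AlternatingMap.ext fun v =>
      (hrho p g v).trans (exteriorPower.map_apply_ιMulti _ v).symm)
  rw [rhoT, hmap, hmap]
  exact map_map_mem_diagRel _ ht

theorem isQuotIso_iff_eq_of_le {G' M : Type} [AddCommGroup M] [Module K M] [Module.Finite K M]
    {N₁ N₂ : Submodule K M} (h : N₁ ≤ N₂) {ρ : G' → M →ₗ[K] M}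
    (hρ : ∀ g, ∀ x ∈ N₂, ρ g x ∈ N₂) : IsQuotIso K N₁ N₂ ρ ρ ↔ N₁ = N₂ := by
  constructor
  · rintro ⟨e, -⟩
    have hN₁ := Submodule.finrank_quotient_add_finrank N₁
    have hN₂ := Submodule.finrank_quotient_add_finrank N₂
    have hquot := e.finrank_eq
    exact Submodule.eq_of_le_of_finrank_eq h (by omega)
  · rintro rfl
    refine ⟨LinearEquiv.refl K _, fun g x y hxy => ?_⟩
    rw [LinearEquiv.refl_apply, Submodule.Quotient.eq] at hxy ⊢
    rw [← map_sub]
    exact hρ g _ hxy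

end Equivariance

theorem statement11_general (K : Type) [Field K] [CharZero K] (n : ℕ)
    (a b k : ℕ) (hba : b ≤ a) (hk1 : 1 ≤ k) (hkb : k ≤ b)
    (mf : ∀ p q : ℕ, Lam K n p ⊗[K] Lam K n q →ₗ[K] Lam K n (p + q))
    (Df : ∀ p q : ℕ, Lam K n (p + q) →ₗ[K] Lam K n p ⊗[K] Lam K n q)
    (hmf : ∀ p q, IsMulMap K n p q (mf p q))
    (hDf : ∀ p q, IsComulMap K n p q (Df p q))
    (rho : ∀ p : ℕ, GLn K n → (Lam K n p →ₗ[K] Lam K n p))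
    (hrho : IsExtAction K n rho) :
    IsQuotIso K
        (LinearMap.range (gammaMap K n mf Df a b k (hkb.trans hba) hkb))
        (schurRel K n mf Df a b)
        (rhoT K n rho a b) (rhoT K n rho a b) ↔
      (k < a ∨ a = 1 ∨ n ≤ a + 1) := by
  have hk : k + (b - k) = b := Nat.add_sub_cancel' hkb
  have hb : 1 + (b - 1) = b := Nat.add_sub_cancel' (hk1.trans hkb)
  rw [range_gammaMap hmf hDf, schurRel_eq_diagRel hmf hDf (hk1.trans hkb),
    isQuotIso_iff_eq_of_le (gammaRel_le_diagRel hk hb) fun g _ ht => rhoT_mem_diagRel hrho g ht,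
    gammaRel_eq_diagRel_iff hba hk1 hk hb, Module.finrank_fin_fun]

/-- Corollary 5.4 of the paper: for `a ≥ b ≥ k ≥ 1` and `n ≥ a+b`,
`coker(γ_k) ≅ L_{(a,b)}` as `G`-modules iff `a > k` or `a = b = k = 1`. -/
theorem statement11 (K : Type) [Field K] [CharZero K] (n : ℕ)
    (a b k : ℕ) (hba : b ≤ a) (hk1 : 1 ≤ k) (hkb : k ≤ b) (hn : a + b ≤ n)
    (mf : ∀ p q : ℕ, Lam K n p ⊗[K] Lam K n q →ₗ[K] Lam K n (p+q))
    (Df : ∀ p q : ℕ, Lam K n (p+q) →ₗ[K] Lam K n p ⊗[K] Lam K n q)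
    (hmf : ∀ p q, IsMulMap K n p q (mf p q))
    (hDf : ∀ p q, IsComulMap K n p q (Df p q))
    (rho : ∀ p : ℕ, GLn K n → (Lam K n p →ₗ[K] Lam K n p))
    (hrho : IsExtAction K n rho) :
    IsQuotIso K
        (LinearMap.range (gammaMap K n mf Df a b k (hkb.trans hba) hkb))
        (schurRel K n mf Df a b)
        (rhoT K n rho a b) (rhoT K n rho a b) ↔
      (k < a ∨ (a = 1 ∧ b = 1 ∧ k = 1)) :=
  (statement11_general K n a b k hba hk1 hkb mf Df hmf hDf rho hrho).trans (by omega)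

end MMS
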